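/- For each j ∈ {3,4}, each integer s ≥ 0, and each integer t ≥ 1: if a (possibly empty) graph G is ST^(j)-(s,t)-degenerate, then G is ST^(j)-(ks,kt)-degenerate for every k ∈ ℕ. -/

import Mathlib

/-!
Replace each operation `(u, W)` of a legal sequence by `k` copies of itself, and start from the
shield and target multiplied by `k`. Along the copies the weight `S w + T w` of every `w ∈ W` is
constant, while that of `u` drops by one each time. As `S u + T u` exceeds `∑ (S w + T w)` by at
least `1`, the multiplied weights differ by at least `k`, which leaves room for `k` legal copies.
The copies use up the target of `u` only if it was `1` originally, and then at the last copy,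
so the copies together act as the original operation on the multiplied values. The saved
sets `W` are unchanged, so a restricted sequence stays restricted.
-/

open scoped Classical

noncomputable section

namespace StrictDeg

/-- The state of the `ShadeSave` process: the active vertex set (the vertex set of the
current induced subgraph), the current shield, and the current target. -/
structure State (V : Type) where
  A : Finset V
  S : V → ℕ
  T : V → ℕ

variable {V : Type}

/-- The output of the operation `ShadeSave(G[A], S, T, u, W)`. -/
def applyStep (G : SimpleGraph V) (st : State V) (u : V) (W : Finset V) : State V where
  A := if st.T u = 1 then st.A.erase u else st.A
  S := fun v => if G.Adj u v ∧ v ∈ st.A ∧ v ∉ W then st.S v - 1 else st.S v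
  T := fun v => if v = u ∧ 1 < st.T u then st.T u - 1 else st.T v

/-- Legality of the operation `ShadeSave(G[A], S, T, u, W)`:  `u` is a vertex of the current
graph, `W` is a set of neighbors of `u` in the current graph,
`S u + T u > ∑_{w ∈ W} (S w + T w)`, and the output shield is nonnegative (in `ℕ` terms:
every neighbor of `u` in the current graph that is not saved has shield value at least 1). -/
def LegalStep (G : SimpleGraph V) (st : State V) (u : V) (W : Finset V) : Prop :=
  u ∈ st.A ∧
  (∀ w ∈ W, w ∈ st.A ∧ G.Adj u w) ∧
  (∑ w ∈ W, (st.S w + st.T w)) < st.S u + st.T u ∧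
  (∀ v ∈ st.A, G.Adj u v → v ∉ W → 1 ≤ st.S v)

/-- `LegalSeq G st l` means `l` is a legal sequence of `ShadeSave` operations starting
from the state `st`. -/
def LegalSeq (G : SimpleGraph V) : State V → List (V × Finset V) → Prop
  | _, [] => True
  | st, op :: rest => LegalStep G st op.1 op.2 ∧ LegalSeq G (applyStep G st op.1 op.2) rest

/-- The final state after applying the operations in `l` in order. -/
def finalState (G : SimpleGraph V) (st : State V) (l : List (V × Finset V)) : State V :=
  l.foldl (fun s op => applyStep G s op.1 op.2) st

/-- The induced subgraph of `G` on `A`, with shield `S` and target `T`, admits a complete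
legal sequence, i.e. it is `ST⁽³⁾`-`(S,T)`-degenerate. -/
def ST3DegOn (G : SimpleGraph V) (A : Finset V) (S T : V → ℕ) : Prop :=
  ∃ l : List (V × Finset V),
    LegalSeq G ⟨A, S, T⟩ l ∧ (finalState G ⟨A, S, T⟩ l).A = ∅

/-- The induced subgraph of `G` on `A`, with shield `S` and target `T`, admits a complete
restricted (every operation saves on at most one vertex) legal sequence, i.e. it is
`ST⁽⁴⁾`-`(S,T)`-degenerate. -/
def ST4DegOn (G : SimpleGraph V) (A : Finset V) (S T : V → ℕ) : Prop :=
  ∃ l : List (V × Finset V),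
    LegalSeq G ⟨A, S, T⟩ l ∧ (∀ op ∈ l, op.2.card ≤ 1) ∧
      (finalState G ⟨A, S, T⟩ l).A = ∅

/-- `G` is `ST⁽³⁾`-`(S,T)`-degenerate. -/
def ST3Deg [Fintype V] (G : SimpleGraph V) (S T : V → ℕ) : Prop :=
  ST3DegOn G Finset.univ S T

/-- `G` is `ST⁽⁴⁾`-`(S,T)`-degenerate. -/
def ST4Deg [Fintype V] (G : SimpleGraph V) (S T : V → ℕ) : Prop :=
  ST4DegOn G Finset.univ S T

/-- The fractional strict type-3 degeneracy
`ST⁽³⁾*(G) = inf {(s+t)/t : G is ST⁽³⁾-(s,t)-degenerate}`. -/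
def ST3Star [Fintype V] (G : SimpleGraph V) : ℝ :=
  sInf { x : ℝ | ∃ s t : ℕ, 1 ≤ t ∧ ST3Deg G (fun _ => s) (fun _ => t) ∧
    x = ((s : ℝ) + t) / t }

/-- The fractional strict type-4 degeneracy
`ST⁽⁴⁾*(G) = inf {(s+t)/t : G is ST⁽⁴⁾-(s,t)-degenerate}`. -/
def ST4Star [Fintype V] (G : SimpleGraph V) : ℝ :=
  sInf { x : ℝ | ∃ s t : ℕ, 1 ≤ t ∧ ST4Deg G (fun _ => s) (fun _ => t) ∧
    x = ((s : ℝ) + t) / t }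

/-- A cover `𝓗 = (L, H)` of the graph `G`. -/
structure Cover (G : SimpleGraph V) where
  /-- The vertex type of the cover graph `H`. -/
  U : Type
  fin : Fintype U
  /-- The cover graph. -/
  H : SimpleGraph U
  /-- The lists: `L v` is the part of the partition of `V(H)` corresponding to `v`. -/
  L : V → Finset U
  part : ∀ x : U, ∃! v : V, x ∈ L v
  indep : ∀ v : V, ∀ x ∈ L v, ∀ y ∈ L v, ¬ H.Adj x y
  cross : ∀ u v : V, ∀ x ∈ L u, ∀ y ∈ L v, H.Adj x y → G.Adj u v
  matching : ∀ u v : V, G.Adj u v → ∀ x ∈ L u, ∀ y ∈ L v, ∀ y' ∈ L v,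
      H.Adj x y → H.Adj x y' → y = y'

/-- `G` is `(𝓗, b)`-colorable: there is an independent set of the cover graph meeting
every list in at least `b` vertices. -/
def Cover.Colorable {G : SimpleGraph V} (C : Cover G) (b : ℕ) : Prop :=
  ∃ I : Finset C.U, (∀ x ∈ I, ∀ y ∈ I, ¬ C.H.Adj x y) ∧ ∀ v : V, b ≤ (I ∩ C.L v).card

/-- `G` is `(a,b)`-DP-colorable. -/
def DPColorable (G : SimpleGraph V) (a b : ℕ) : Prop :=
  ∀ C : Cover G, (∀ v : V, (C.L v).card = a) → C.Colorable b

/-- The fractional DP-chromatic number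
`χ*_DP(G) = inf {a/b : G is (a,b)-DP-colorable}`. -/
def DPStar (G : SimpleGraph V) : ℝ :=
  sInf { x : ℝ | ∃ a b : ℕ, 1 ≤ b ∧ b ≤ a ∧ DPColorable G a b ∧ x = (a : ℝ) / b }

/-- `G` is `(F₁, F₂)`-DP-colorable. -/
def DPColorableFn (G : SimpleGraph V) (F₁ F₂ : V → ℕ) : Prop :=
  ∀ C : Cover G, (∀ v : V, (C.L v).card = F₁ v) →
    ∃ I : Finset C.U, (∀ x ∈ I, ∀ y ∈ I, ¬ C.H.Adj x y) ∧
      ∀ v : V, (I ∩ C.L v).card = F₂ v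

section Scaling

variable {G : SimpleGraph V} {st st' : State V} {u v : V} {W : Finset V} {k i : ℕ}

theorem mem_applyStep_A :
    v ∈ (applyStep G st u W).A ↔ v ∈ st.A ∧ (v = u → st.T u ≠ 1) := by
  by_cases hT : st.T u = 1 <;> simp [applyStep, hT, and_comm]

theorem LegalStep.applyStep_S_add (hl : LegalStep G st u W) (hv : v ∈ st.A) :
    (applyStep G st u W).S v + (if G.Adj u v ∧ v ∉ W then 1 else 0) = st.S v := by
  by_cases hloss : G.Adj u v ∧ v ∉ W
  · have hS : 1 ≤ st.S v := hl.2.2.2 v hv hloss.1 hloss.2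
    simpa [applyStep, hv, hloss] using Nat.sub_add_cancel hS
  · simp [applyStep, hv, hloss]

theorem applyStep_T_add (hT : 0 < st.T u) (hv : v ∈ (applyStep G st u W).A) :
    (applyStep G st u W).T v + (if v = u then 1 else 0) = st.T v := by
  obtain rfl | hvu := eq_or_ne v u
  · have hT1 : 1 < st.T v := by
      have := (mem_applyStep_A.1 hv).2 rfl
      omega
    simpa [applyStep, hT1] using Nat.sub_add_cancel hT
  · simp [applyStep, hvu]

/-- The target is positive on the active vertices, as the paper demands of a target. The values at
deleted vertices carry no meaning and are left unconstrained. -/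
def State.PosTarget (st : State V) : Prop :=
  ∀ v ∈ st.A, 0 < st.T v

theorem State.PosTarget.applyStep (hT : st.PosTarget) :
    (applyStep G st u W).PosTarget := by
  intro v hv
  have hvT : 0 < st.T v := hT v (mem_applyStep_A.1 hv).1
  simp only [StrictDeg.applyStep]
  split_ifs <;> omega

/-- `st'` is the multiple `k • st`: the active vertices agree, and on them shield and target are
multiplied by `k`. Deleted vertices are ignored: they keep the target `1` in both processes, so the
factor `k` is lost there. -/
structure Scaled (k : ℕ) (st st' : State V) : Prop where
  A_eq : st'.A = st.A
  S_eq : ∀ v ∈ st'.A, st'.S v = k * st.S v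
  T_eq : ∀ v ∈ st'.A, st'.T v = k * st.T v

/-- `st'` is what `i` copies of the operation `(u, W)` make of the multiple `k • st`. The losses
stand on the left-hand sides to avoid truncated subtraction; `i < k * st.T u` says that the copies
have not yet used up the target of `u`, so that `u` is still active. -/
structure ScaledAfter (G : SimpleGraph V) (u : V) (W : Finset V) (k i : ℕ) (st st' : State V) :
    Prop where
  mem_A_iff : ∀ v, v ∈ st'.A ↔ v ∈ st.A ∧ (v = u → i < k * st.T u)
  S_add : ∀ v ∈ st'.A, st'.S v + (if G.Adj u v ∧ v ∉ W then i else 0) = k * st.S v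
  T_add : ∀ v ∈ st'.A, st'.T v + (if v = u then i else 0) = k * st.T v

theorem Scaled.scaledAfter_zero (h : Scaled k st st') (hk : 0 < k) (hT : 0 < st.T u) :
    ScaledAfter G u W k 0 st st' where
  mem_A_iff v := by simp [h.A_eq, hk, hT]
  S_add v hv := by simpa using h.S_eq v hv
  T_add v hv := by simpa using h.T_eq v hv

namespace ScaledAfter

theorem mem_A_self (h : ScaledAfter G u W k i st st') (hi : i < k) (hu : u ∈ st.A)
    (hT : 0 < st.T u) : u ∈ st'.A :=
  (h.mem_A_iff u).2 ⟨hu, fun _ => hi.trans_le (Nat.le_mul_of_pos_right k hT)⟩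

theorem mem_A_of_ne (h : ScaledAfter G u W k i st st') (hv : v ∈ st.A) (hvu : v ≠ u) :
    v ∈ st'.A :=
  (h.mem_A_iff v).2 ⟨hv, fun e => absurd e hvu⟩

theorem weight_self_add (h : ScaledAfter G u W k i st st') (hu : u ∈ st'.A) :
    st'.S u + st'.T u + i = k * (st.S u + st.T u) := by
  have hS : st'.S u = k * st.S u := by simpa using h.S_add u hu
  have hT : st'.T u + i = k * st.T u := by simpa using h.T_add u hu
  rw [hS, add_assoc, hT, mul_add]

theorem weight_of_saved (h : ScaledAfter G u W k i st st') (hv : v ∈ st'.A) (hvW : v ∈ W)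
    (hvu : v ≠ u) : st'.S v + st'.T v = k * (st.S v + st.T v) := by
  have hS : st'.S v = k * st.S v := by simpa [hvW] using h.S_add v hv
  have hT : st'.T v = k * st.T v := by simpa [hvu] using h.T_add v hv
  rw [hS, hT, mul_add]

theorem legalStep (h : ScaledAfter G u W k i st st') (hi : i < k) (hT : 0 < st.T u)
    (hl : LegalStep G st u W) : LegalStep G st' u W := by
  obtain ⟨hu, hW, hweight, hshield⟩ := hl
  have hu' : u ∈ st'.A := h.mem_A_self hi hu hT
  have hW' : ∀ w ∈ W, w ∈ st'.A := fun w hw => h.mem_A_of_ne (hW w hw).1 (hW w hw).2.ne'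
  refine ⟨hu', fun w hw => ⟨hW' w hw, (hW w hw).2⟩, ?_, fun v hv huv hvW => ?_⟩
  · suffices ∑ w ∈ W, (st'.S w + st'.T w) + i < st'.S u + st'.T u + i from
      Nat.lt_of_add_lt_add_right this
    calc ∑ w ∈ W, (st'.S w + st'.T w) + i
        = k * ∑ w ∈ W, (st.S w + st.T w) + i := by
          rw [Finset.mul_sum, Finset.sum_congr rfl fun w hw =>
            h.weight_of_saved (hW' w hw) hw (hW w hw).2.ne']
      _ < k * ∑ w ∈ W, (st.S w + st.T w) + k := Nat.add_lt_add_left hi _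
      _ = k * (∑ w ∈ W, (st.S w + st.T w) + 1) := (Nat.mul_succ _ _).symm
      _ ≤ k * (st.S u + st.T u) := Nat.mul_le_mul_left k hweight
      _ = st'.S u + st'.T u + i := (h.weight_self_add hu').symm
  · have hS : st'.S v + i = k * st.S v := by simpa [huv, hvW] using h.S_add v hv
    have hk : k ≤ k * st.S v :=
      Nat.le_mul_of_pos_right k (hshield v ((h.mem_A_iff v).1 hv).1 huv hvW)
    omega

theorem succ (h : ScaledAfter G u W k i st st') (hi : i < k) (hT : 0 < st.T u)
    (hl : LegalStep G st u W) : ScaledAfter G u W k (i + 1) st (applyStep G st' u W) := by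
  have hl' : LegalStep G st' u W := h.legalStep hi hT hl
  have hTu : st'.T u + i = k * st.T u := by simpa using h.T_add u hl'.1
  have hlt : i < k * st.T u := ((h.mem_A_iff u).1 hl'.1).2 rfl
  refine ⟨fun v => ?_, fun v hv => ?_, fun v hv => ?_⟩
  · have hne : st'.T u ≠ 1 ↔ i + 1 < k * st.T u := by omega
    rw [mem_applyStep_A, h.mem_A_iff, hne]
    simp only [hlt, implies_true, and_true]
  · have hv' : v ∈ st'.A := (mem_applyStep_A.1 hv).1
    have hS := h.S_add v hv'
    have hstep := hl'.applyStep_S_add hv'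
    split_ifs at hS hstep ⊢ <;> omega
  · have hT' := h.T_add v (mem_applyStep_A.1 hv).1
    have hstep := applyStep_T_add (by omega) hv
    split_ifs at hT' hstep ⊢ <;> omega

theorem scaled_applyStep (h : ScaledAfter G u W k k st st') (hk : 0 < k) (hT : 0 < st.T u)
    (hl : LegalStep G st u W) : Scaled k (applyStep G st u W) st' := by
  have hA : st'.A = (applyStep G st u W).A := by
    ext v
    have hne : k < k * st.T u ↔ st.T u ≠ 1 := by
      rw [Nat.lt_mul_iff_one_lt_right hk]
      omega
    rw [h.mem_A_iff, mem_applyStep_A, hne]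
  refine ⟨hA, fun v hv => ?_, fun v hv => ?_⟩
  · have hS := h.S_add v hv
    rw [← hl.applyStep_S_add ((h.mem_A_iff v).1 hv).1, mul_add] at hS
    simpa using hS
  · have hT' := h.T_add v hv
    rw [← applyStep_T_add hT (hA ▸ hv), mul_add] at hT'
    simpa using hT'

end ScaledAfter

theorem legalSeq_append {l₁ l₂ : List (V × Finset V)} :
    LegalSeq G st (l₁ ++ l₂) ↔ LegalSeq G st l₁ ∧ LegalSeq G (finalState G st l₁) l₂ := by
  induction l₁ generalizing st with
  | nil => exact (iff_of_eq (true_and _)).symm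
  | cons op l₁ ih => exact (and_congr_right' ih).trans and_assoc.symm

theorem finalState_append {l₁ l₂ : List (V × Finset V)} :
    finalState G st (l₁ ++ l₂) = finalState G (finalState G st l₁) l₂ :=
  List.foldl_append

theorem Scaled.replicate_of_le (h : Scaled k st st') (hk : 0 < k) (hT : 0 < st.T u)
    (hl : LegalStep G st u W) (hi : i ≤ k) :
    LegalSeq G st' (List.replicate i (u, W)) ∧
      ScaledAfter G u W k i st (finalState G st' (List.replicate i (u, W))) := by
  induction i with
  | zero => exact ⟨trivial, h.scaledAfter_zero hk hT⟩
  | succ i ih =>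
    obtain ⟨hseq, hafter⟩ := ih (Nat.le_of_succ_le hi)
    rw [List.replicate_succ', legalSeq_append, finalState_append]
    exact ⟨⟨hseq, hafter.legalStep hi hT hl, trivial⟩, hafter.succ hi hT hl⟩

theorem Scaled.replicate (h : Scaled k st st') (hk : 0 < k) (hT : 0 < st.T u)
    (hl : LegalStep G st u W) :
    LegalSeq G st' (List.replicate k (u, W)) ∧
      Scaled k (applyStep G st u W) (finalState G st' (List.replicate k (u, W))) :=
  (h.replicate_of_le hk hT hl le_rfl).imp_right fun hafter => hafter.scaled_applyStep hk hT hl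

theorem Scaled.flatMap_replicate (h : Scaled k st st') (hk : 0 < k) (hT : st.PosTarget)
    {l : List (V × Finset V)} (hl : LegalSeq G st l) :
    LegalSeq G st' (l.flatMap (List.replicate k)) ∧
      Scaled k (finalState G st l) (finalState G st' (l.flatMap (List.replicate k))) := by
  induction l generalizing st st' with
  | nil => exact ⟨trivial, h⟩
  | cons op l ih =>
    obtain ⟨hop, hrest⟩ := hl
    obtain ⟨hcopies, h'⟩ := h.replicate hk (hT op.1 hop.1) hop
    obtain ⟨hrest', hfinal⟩ := ih h' hT.applyStep hrest
    rw [List.flatMap_cons, legalSeq_append, finalState_append]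
    exact ⟨⟨hcopies, hrest'⟩, hfinal⟩

end Scaling

theorem stDeg_const_smul_general (G : SimpleGraph V) {A : Finset V} {S T : V → ℕ}
    (hT : ∀ v ∈ A, 1 ≤ T v) {k : ℕ} (hk : 1 ≤ k) :
    (ST3DegOn G A S T → ST3DegOn G A (fun v => k * S v) (fun v => k * T v)) ∧
    (ST4DegOn G A S T → ST4DegOn G A (fun v => k * S v) (fun v => k * T v)) := by
  have hscaled : Scaled k ⟨A, S, T⟩ ⟨A, fun v => k * S v, fun v => k * T v⟩ :=
    ⟨rfl, fun _ _ => rfl, fun _ _ => rfl⟩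
  constructor
  · rintro ⟨l, hl, hempty⟩
    obtain ⟨hl', hfinal⟩ := hscaled.flatMap_replicate hk hT hl
    exact ⟨_, hl', hfinal.A_eq.trans hempty⟩
  · rintro ⟨l, hl, hrestricted, hempty⟩
    obtain ⟨hl', hfinal⟩ := hscaled.flatMap_replicate hk hT hl
    refine ⟨_, hl', fun op hop => ?_, hfinal.A_eq.trans hempty⟩
    obtain ⟨op', hop', hcopy⟩ := List.mem_flatMap.1 hop
    exact List.eq_of_mem_replicate hcopy ▸ hrestricted op' hop'

/-- For each `j ∈ {3,4}`, each integer `s ≥ 0`, and each integer `t ≥ 1`: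
if a (possibly empty) graph `G` is `ST⁽ʲ⁾`-`(s,t)`-degenerate, then `G` is
`ST⁽ʲ⁾`-`(ks,kt)`-degenerate for every `k ∈ ℕ` (so `k ≥ 1`). -/
theorem stDeg_const_smul {V : Type} [Fintype V] (G : SimpleGraph V)
    (s t : ℕ) (ht : 1 ≤ t) (k : ℕ) (hk : 1 ≤ k) :
    (ST3Deg G (fun _ => s) (fun _ => t) → ST3Deg G (fun _ => k * s) (fun _ => k * t)) ∧
    (ST4Deg G (fun _ => s) (fun _ => t) → ST4Deg G (fun _ => k * s) (fun _ => k * t)) :=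
  stDeg_const_smul_general G (fun _ _ => ht) hk

end StrictDeg
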